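/- Let P ⊆ ℕ be Π⁰₄, i.e., there is a computable predicate R ⊆ ℕ⁵ such that P(n) ⟺ ∀p ∃q ∀m ∃s R(p,q,m,s,n). Then there exist e₀ ∈ ℕ and a total computable function h : ℕ → ℕ such that for all n: P(n) holds if and only if h(n) (=^{ce})⁺ e₀, and moreover h(n) ⊆_{=^{ce}} e₀ for all n. -/

import Mathlib

/-- The `e`-th partial computable function. -/
def phi (e : ℕ) : ℕ →. ℕ :=
  Nat.Partrec.Code.eval (Denumerable.ofNat Nat.Partrec.Code e)

/-- `W_e`, the `e`-th c.e. set: the domain of `φ_e`. -/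
def WSet (e : ℕ) : Set ℕ := (phi e).Dom

/-- The `E`-equivalence class of `k`. -/
def classOf (E : ℕ → ℕ → Prop) (k : ℕ) : Set ℕ := {x | E k x}

/-- Computable reducibility of binary relations on ℕ. -/
def Reduces (E F : ℕ → ℕ → Prop) : Prop :=
  ∃ f : ℕ → ℕ, Computable f ∧ ∀ m n, E m n ↔ F (f m) (f n)

/-- The computable FS-jump of `E`: `e E⁺ e'` iff the set of `E`-classes of elements
of `ran φ_e` equals the set of `E`-classes of elements of `ran φ_{e'}`. -/
def FSJump (E : ℕ → ℕ → Prop) : ℕ → ℕ → Prop :=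
  fun e e' => classOf E '' (phi e).ran = classOf E '' (phi e').ran

/-- Equality of c.e. sets: `e =^{ce} e'` iff `W_e = W_{e'}`. -/
def eqCE : ℕ → ℕ → Prop := fun e e' => WSet e = WSet e'

/-- `e ⊆_E e'`: every element of `ran φ_e` is `E`-equivalent to some element
of `ran φ_{e'}`. -/
def subE (E : ℕ → ℕ → Prop) (e e' : ℕ) : Prop :=
  ∀ k ∈ (phi e).ran, ∃ m ∈ (phi e').ran, E k m

/-!
For `A ⊆ ℕ` let `A°` be the largest initial segment contained in `A`. If `A` is c.e. then so is
`A°`, and `A° = ℕ` exactly when `A = ℕ`. Write `P n ↔ ∀ p, ∃ q, A n p q = ℕ` with `A n p q`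
uniformly c.e. Let `h n` enumerate indices of the sets `{p} × Iio k` and `{p} × (A n p q)°`, and let
`e₀` enumerate indices of all sets `{p} × I` with `I` an initial segment of `ℕ`. An initial segment
is either some `Iio k` or `ℕ` itself, so every set enumerated by `h n` is enumerated by `e₀`, and
the only sets `h n` can miss are the full columns `{p} × ℕ`; such a column is present exactly when
`A n p q = ℕ` for some `q`.
-/

open Set Encodable
open Nat.Partrec (Code)

/-! ### Recursively enumerable predicates -/

section REPred

variable {α β γ : Type*} [Primcodable α] [Primcodable β] [Primcodable γ]

theorem computable_prod_right_comm :
    Computable fun y : (α × β) × γ => ((y.1.1, y.2), y.1.2) :=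
  ((Computable.fst.comp Computable.fst).pair Computable.snd).pair
    (Computable.snd.comp Computable.fst)

theorem rePred_comp {p : β → Prop} {f : α → β} (hp : REPred p) (hf : Computable f) :
    REPred fun a => p (f a) :=
  Partrec.comp hp hf

theorem rePred_and {p q : α → Prop} (hp : REPred p) (hq : REPred q) :
    REPred fun a => p a ∧ q a :=
  (Partrec.bind hp (Partrec.comp hq Computable.fst).to₂).dom_re.of_eq fun _ => by
    simp [Part.assert, Part.bind]

theorem rePred_exists_of_computable {T : α → ℕ → Bool} (hT : Computable₂ T) :
    REPred fun a => ∃ s, T a s = true :=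
  (Partrec.rfind hT.partrec₂).dom_re.of_eq fun a => by
    simp only [Nat.rfind_dom, PFun.coe_val, Part.mem_some_iff, Part.some_dom, implies_true,
      and_true, eq_comm]

theorem rePred_forall_lt {p : α → ℕ → Prop} (hp : REPred fun y : α × ℕ => p y.1 y.2) :
    REPred fun y : α × ℕ => ∀ m < y.2, p y.1 m := by
  have hstep : Partrec₂ fun (y : α × ℕ) (z : ℕ × Unit) =>
      Part.assert (p y.1 z.1) fun _ => Part.some () :=
    Partrec.comp hp ((Computable.fst.comp Computable.fst).pair
      (Computable.fst.comp Computable.snd))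
  refine (Partrec.nat_rec Computable.snd (Computable.const ()).partrec hstep).dom_re.of_eq ?_
  rintro ⟨a, k⟩
  induction k with
  | zero => simp
  | succ k ih =>
    rw [Nat.forall_lt_succ_right, ← ih]
    exact ⟨fun ⟨hlt, hk, _⟩ => ⟨hlt, hk⟩, fun ⟨hlt, hk⟩ => ⟨hlt, hk, trivial⟩⟩

/- Mathlib's case distinctions for partial functions require one branch to be total, so each case is
treated as an implication that holds trivially in the other one. -/
theorem rePred_sumElim {p : α → β → Prop} {q : α → γ → Prop}
    (hp : REPred fun y : α × β => p y.1 y.2) (hq : REPred fun y : α × γ => q y.1 y.2) :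
    REPred fun y : α × (β ⊕ γ) => Sum.elim (p y.1) (q y.1) y.2 := by
  have hleft : REPred fun y : α × (β ⊕ γ) => Sum.elim (p y.1) (fun _ => True) y.2 :=
    (Partrec.sumCasesOn_left Computable.snd
      (Partrec.comp hp ((Computable.fst.comp Computable.fst).pair Computable.snd)).to₂
      (Computable.const ()).to₂).dom_re.of_eq <| by rintro ⟨a, b | c⟩ <;> simp [Part.assert]
  have hright : REPred fun y : α × (β ⊕ γ) => Sum.elim (fun _ => True) (q y.1) y.2 :=
    (Partrec.sumCasesOn_right Computable.snd (Computable.const ()).to₂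
      (Partrec.comp hq ((Computable.fst.comp Computable.fst).pair
        Computable.snd)).to₂).dom_re.of_eq <| by rintro ⟨a, b | c⟩ <;> simp [Part.assert]
  exact (rePred_and hleft hright).of_eq <| by rintro ⟨a, b | c⟩ <;> simp

end REPred

/-! ### Uniformly c.e. families -/

section UniformlyRE

variable {α β ι : Type*} [Primcodable α] [Primcodable β] [Primcodable ι]

/-- The sets `A a` are c.e. uniformly in `a`. A family with several parameters is uncurried. -/
def UniformlyRE (A : α → Set ℕ) : Prop :=
  REPred fun y : α × ℕ => y.2 ∈ A y.1

theorem UniformlyRE.comp {A : β → Set ℕ} {f : α → β} (hA : UniformlyRE A) (hf : Computable f) :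
    UniformlyRE fun a => A (f a) :=
  rePred_comp hA ((hf.comp Computable.fst).pair Computable.snd)

theorem UniformlyRE.sumElim {A : α → β → Set ℕ} {B : α → ι → Set ℕ}
    (hA : UniformlyRE fun y : α × β => A y.1 y.2) (hB : UniformlyRE fun y : α × ι => B y.1 y.2) :
    UniformlyRE fun y : α × (β ⊕ ι) => Sum.elim (A y.1) (B y.1) y.2 := by
  have hmem := rePred_sumElim (p := fun (y : α × ℕ) b => y.2 ∈ A y.1 b)
    (q := fun y i => y.2 ∈ B y.1 i) (rePred_comp hA computable_prod_right_comm :)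
    (rePred_comp hB computable_prod_right_comm :)
  exact REPred.of_eq (rePred_comp hmem computable_prod_right_comm :) <| by
    rintro ⟨⟨a, b | i⟩, x⟩ <;> rfl

theorem uniformlyRE_setOf_exists {T : α → ℕ → ℕ → Bool}
    (hT : Computable fun y : (α × ℕ) × ℕ => T y.1.1 y.1.2 y.2) :
    UniformlyRE fun a => {m | ∃ s, T a m s = true} :=
  rePred_exists_of_computable (T := fun y : α × ℕ => T y.1 y.2) hT.to₂

theorem uniformlyRE_setOf_exists_reordered {R : ℕ × ℕ × ℕ × ℕ × α → Bool} (hR : Computable R) :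
    UniformlyRE fun y : (α × ℕ) × ℕ => {m | ∃ s, R (y.1.2, y.2, m, s, y.1.1) = true} := by
  have hreorder : Computable fun y : (((α × ℕ) × ℕ) × ℕ) × ℕ =>
      (y.1.1.1.2, y.1.1.2, y.1.2, y.2, y.1.1.1.1) :=
    have hfst := Computable.fst.comp (Computable.fst.comp Computable.fst)
    (Computable.snd.comp hfst).pair <|
      (Computable.snd.comp (Computable.fst.comp Computable.fst)).pair <|
      (Computable.snd.comp Computable.fst).pair <| Computable.snd.pair (Computable.fst.comp hfst)
  exact uniformlyRE_setOf_exists (T := fun (y : (α × ℕ) × ℕ) m s => R (y.1.2, y.2, m, s, y.1.1))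
    (hR.comp hreorder)

theorem uniformlyRE_Iio : UniformlyRE (Iio : ℕ → Set ℕ) :=
  ComputablePred.to_re ⟨inferInstance,
    Primrec.to_comp (Primrec.nat_lt.comp Primrec.snd Primrec.fst).decide⟩

theorem exists_computable_phi_eq {f : α → ℕ →. ℕ} (hf : Partrec₂ f) :
    ∃ h : α → ℕ, Computable h ∧ ∀ a, phi (h a) = f a := by
  obtain ⟨c, hc⟩ := Code.exists_code.1 hf
  refine ⟨fun a => encode (c.curry (encode a)), ?_, fun a => funext fun x => ?_⟩
  · exact Computable.encode.comp
      (Code.primrec₂_curry.to_comp.comp (Computable.const c) Computable.encode)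
  · simp [phi, Code.eval_curry, hc, Part.map_id']

theorem exists_computable_WSet_eq {S : α → Set ℕ} (hS : UniformlyRE S) :
    ∃ h : α → ℕ, Computable h ∧ ∀ a, WSet (h a) = S a := by
  obtain ⟨h, hh, hphi⟩ := exists_computable_phi_eq
    (f := fun a x => (Part.assert (x ∈ S a) fun _ => Part.some ()).map fun _ => 0)
    (Partrec.map hS (Computable.const 0).to₂)
  refine ⟨h, hh, fun a => ext fun x => ?_⟩
  simp [WSet, hphi, PFun.Dom, Part.assert]

theorem exists_computable_ran_phi_eq {g : α → ι → ℕ} (hg : Computable₂ g) :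
    ∃ h : α → ℕ, Computable h ∧ ∀ a, (phi (h a)).ran = range (g a) := by
  obtain ⟨h, hh, hphi⟩ := exists_computable_phi_eq
    (f := fun a x => (Part.ofOption (decode (α := ι) x)).map (g a))
    ((Computable.decode.comp Computable.snd).ofOption.map
      (hg.comp (Computable.fst.comp Computable.fst) Computable.snd))
  refine ⟨h, hh, fun a => ext fun e => ?_⟩
  simp only [PFun.ran, hphi, mem_ofPred_eq, Part.mem_map_iff, Part.mem_ofOption, mem_range]
  exact ⟨fun ⟨_, i, _, hi⟩ => ⟨i, hi⟩, fun ⟨i, hi⟩ => ⟨encode i, i, encodek i, hi⟩⟩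

theorem exists_computable_image_WSet_ran_phi_eq {S : α → ι → Set ℕ}
    (hS : UniformlyRE fun y : α × ι => S y.1 y.2) :
    ∃ h : α → ℕ, Computable h ∧ ∀ a, WSet '' (phi (h a)).ran = range (S a) := by
  obtain ⟨g, hg, hW⟩ := exists_computable_WSet_eq (S := fun y : α × ι => S y.1 y.2) hS
  obtain ⟨h, hh, hran⟩ := exists_computable_ran_phi_eq (g := fun a i => g (a, i)) hg.to₂
  refine ⟨h, hh, fun a => ?_⟩
  rw [hran, ← range_comp]
  exact congrArg range (funext fun i => hW (a, i))

end UniformlyRE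

/-! ### The jump of an equivalence relation -/

section Jump

variable {E : ℕ → ℕ → Prop}

theorem classOf_eq_classOf_iff (hE : Equivalence E) {a b : ℕ} :
    classOf E a = classOf E b ↔ E a b :=
  ⟨fun h => (h.symm ▸ hE.refl b : b ∈ classOf E a),
    fun h => ext fun _ => ⟨hE.trans (hE.symm h), hE.trans h⟩⟩

theorem subE_iff_image_classOf_subset (hE : Equivalence E) {e e' : ℕ} :
    subE E e e' ↔ classOf E '' (phi e).ran ⊆ classOf E '' (phi e').ran := by
  rw [image_subset_iff]
  exact forall₂_congr fun k _ => exists_congr fun m => and_congr_right fun _ =>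
    ⟨fun h => (classOf_eq_classOf_iff hE).2 (hE.symm h),
      fun h => hE.symm ((classOf_eq_classOf_iff hE).1 h)⟩

theorem FSJump_iff_subE_and_subE (hE : Equivalence E) {e e' : ℕ} :
    FSJump E e e' ↔ subE E e e' ∧ subE E e' e := by
  rw [FSJump, Subset.antisymm_iff, subE_iff_image_classOf_subset hE,
    subE_iff_image_classOf_subset hE]

theorem equivalence_eqCE : Equivalence eqCE :=
  eq_equivalence.comap WSet

theorem subE_eqCE_iff {e e' : ℕ} :
    subE eqCE e e' ↔ WSet '' (phi e).ran ⊆ WSet '' (phi e').ran := by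
  rw [image_subset_iff]
  exact forall₂_congr fun k _ => exists_congr fun m => and_congr_right fun _ => eq_comm

theorem FSJump_eqCE_iff {e e' : ℕ} :
    FSJump eqCE e e' ↔ WSet '' (phi e).ran = WSet '' (phi e').ran := by
  rw [FSJump_iff_subE_and_subE equivalence_eqCE, subE_eqCE_iff, subE_eqCE_iff,
    Subset.antisymm_iff]

end Jump

/-! ### Columns over initial segments -/

section LowerInterior

variable {α : Type*} [Preorder α] {A : Set α}

/-- The largest lower set contained in `A`, written `A°` above. -/
def lowerInterior (A : Set α) : Set α :=
  {y | ∀ m ≤ y, m ∈ A}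

theorem isLowerSet_lowerInterior : IsLowerSet (lowerInterior A) :=
  fun _ _ hle h m hm => h m (hm.trans hle)

theorem lowerInterior_subset : lowerInterior A ⊆ A :=
  fun y h => h y le_rfl

theorem lowerInterior_eq_self (hA : IsLowerSet A) : lowerInterior A = A :=
  lowerInterior_subset.antisymm fun _ hy _ hm => hA hm hy

theorem lowerInterior_eq_univ_iff : lowerInterior A = univ ↔ A = univ := by
  refine ⟨fun h => univ_subset_iff.1 (h ▸ lowerInterior_subset), ?_⟩
  rintro rfl
  exact lowerInterior_eq_self isLowerSet_univ

theorem UniformlyRE.lowerInterior {β : Type*} [Primcodable β] {A : β → Set ℕ}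
    (hA : UniformlyRE A) : UniformlyRE fun b => lowerInterior (A b) :=
  (rePred_comp (rePred_forall_lt (p := fun b m => m ∈ A b) hA)
    (Computable.fst.pair (Computable.succ.comp Computable.snd))).of_eq fun _ =>
      forall_congr' fun _ => imp_congr_left Nat.lt_succ_iff

end LowerInterior

/-- The copy `{p} × A` of `A` inside the `p`-th column of `ℕ ≃ ℕ × ℕ`. -/
def column (p : ℕ) (A : Set ℕ) : Set ℕ :=
  {x | x.unpair.1 = p ∧ x.unpair.2 ∈ A}

theorem pair_mem_column {p p' y : ℕ} {A : Set ℕ} :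
    Nat.pair p y ∈ column p' A ↔ p = p' ∧ y ∈ A := by
  simp [column]

theorem column_eq_column_univ_iff {p p' : ℕ} {A : Set ℕ} :
    column p A = column p' univ ↔ p = p' ∧ A = univ := by
  refine ⟨fun h => ?_, by rintro ⟨rfl, rfl⟩; rfl⟩
  have hmem (y : ℕ) : p' = p ∧ y ∈ A :=
    pair_mem_column.1 (h ▸ pair_mem_column.2 ⟨rfl, mem_univ y⟩)
  exact ⟨(hmem 0).1.symm, eq_univ_of_forall fun y => (hmem y).2⟩

theorem UniformlyRE.column {α : Type*} [Primcodable α] {A : α → Set ℕ} {p : α → ℕ}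
    (hA : UniformlyRE A) (hp : Computable p) : UniformlyRE fun a => column (p a) (A a) := by
  have hunpair : Computable fun y : α × ℕ => y.2.unpair := Computable.unpair.comp Computable.snd
  have hcol : ComputablePred fun y : α × ℕ => y.2.unpair.1 = p y.1 :=
    ⟨inferInstance, Primrec.eq.decide.to_comp.comp (Computable.fst.comp hunpair)
      (hp.comp Computable.fst)⟩
  exact rePred_and hcol.to_re
    (rePred_comp hA (Computable.fst.pair (Computable.snd.comp hunpair)))

/-- All copies of initial segments of `ℕ` inside columns: the family enumerated by `e₀`. -/
def lowerColumns : Set (Set ℕ) :=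
  {C | ∃ p A, IsLowerSet A ∧ column p A = C}

section ColumnFamily

variable {α ι : Type*} {A : ℕ → ι → Set ℕ}

/-- The family enumerated by `h n`: column `p` receives every `Iio k`, through the left summand, and
the initial segment `(A p q)°` for every `q`, through the right summand. -/
def columnFamily (A : ℕ → ι → Set ℕ) (i : ℕ × (ℕ ⊕ ι)) : Set ℕ :=
  column i.1 (lowerInterior (Sum.elim Iio (A i.1) i.2))

theorem range_columnFamily_subset : range (columnFamily A) ⊆ lowerColumns := by
  rintro _ ⟨i, rfl⟩
  exact ⟨i.1, _, isLowerSet_lowerInterior, rfl⟩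

theorem column_Iio_mem_range_columnFamily (p k : ℕ) :
    column p (Iio k) ∈ range (columnFamily A) :=
  ⟨(p, .inl k), congrArg (column p) (lowerInterior_eq_self (isLowerSet_Iio k))⟩

theorem column_univ_mem_range_columnFamily_iff {p : ℕ} :
    column p univ ∈ range (columnFamily A) ↔ ∃ q, A p q = univ := by
  simp only [mem_range, columnFamily, column_eq_column_univ_iff, lowerInterior_eq_univ_iff,
    Prod.exists, Sum.exists, Sum.elim_inl, Sum.elim_inr]
  have hIio (k : ℕ) : Iio k ≠ univ := (ne_univ_iff_exists_notMem _).2 ⟨k, self_notMem_Iio⟩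
  simp [hIio]

theorem range_columnFamily_eq_lowerColumns_iff :
    range (columnFamily A) = lowerColumns ↔ ∀ p, ∃ q, A p q = univ := by
  simp only [← column_univ_mem_range_columnFamily_iff]
  refine ⟨fun h p => h ▸ ⟨p, univ, isLowerSet_univ, rfl⟩,
    fun h => range_columnFamily_subset.antisymm ?_⟩
  rintro _ ⟨p, B, hB, rfl⟩
  obtain rfl | ⟨k, rfl⟩ := hB.eq_univ_or_Iio
  · exact h p
  · exact column_Iio_mem_range_columnFamily p k

theorem UniformlyRE.columnFamily [Primcodable α] [Primcodable ι] {A : α → ℕ → ι → Set ℕ}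
    (hA : UniformlyRE fun y : (α × ℕ) × ι => A y.1.1 y.1.2 y.2) :
    UniformlyRE fun y : α × ℕ × (ℕ ⊕ ι) => columnFamily (A y.1) y.2 := by
  have hIio : UniformlyRE fun y : (α × ℕ) × ℕ => Iio y.2 := uniformlyRE_Iio.comp Computable.snd
  have hsegments : UniformlyRE fun y : (α × ℕ) × (ℕ ⊕ ι) =>
      Sum.elim Iio (A y.1.1 y.1.2) y.2 :=
    UniformlyRE.sumElim (A := fun _ : α × ℕ => Iio) (B := fun y => A y.1 y.2) hIio hA
  have hcolumn : Computable fun y : α × ℕ × (ℕ ⊕ ι) => y.2.1 :=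
    Computable.fst.comp Computable.snd
  have hregroup : Computable fun y : α × ℕ × (ℕ ⊕ ι) => ((y.1, y.2.1), y.2.2) :=
    (Computable.fst.pair hcolumn).pair (Computable.snd.comp Computable.snd)
  have hinteriors := (hsegments.comp hregroup).lowerInterior
  exact hinteriors.column hcolumn

theorem exists_image_WSet_ran_phi_eq_lowerColumns : ∃ e, WSet '' (phi e).ran = lowerColumns := by
  have huniv : UniformlyRE fun _ : (Unit × ℕ) × Unit => (univ : Set ℕ) :=
    ComputablePred.to_re ⟨inferInstance, Computable.const true⟩
  obtain ⟨h, -, hran⟩ := exists_computable_image_WSet_ran_phi_eq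
    (S := fun _ : Unit => columnFamily fun _ (_ : Unit) => univ)
    (huniv.columnFamily (A := fun _ _ _ => univ))
  exact ⟨h (), (hran ()).trans <|
    range_columnFamily_eq_lowerColumns_iff.2 fun _ => ⟨(), rfl⟩⟩

end ColumnFamily

theorem pi04_reducible_to_jump_eqCE_general : ∃ e₀ : ℕ, ∀ {α : Type*} [Primcodable α]
    (P : Set α) (R : ℕ × ℕ × ℕ × ℕ × α → Bool), Computable R →
    (∀ a, a ∈ P ↔ ∀ p, ∃ q, ∀ m, ∃ s, R (p, q, m, s, a) = true) →
    ∃ h : α → ℕ, Computable h ∧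
      (∀ a, a ∈ P ↔ FSJump eqCE (h a) e₀) ∧ (∀ a, subE eqCE (h a) e₀) := by
  obtain ⟨e₀, he₀⟩ := exists_image_WSet_ran_phi_eq_lowerColumns
  refine ⟨e₀, fun {α} _ P R hR hP => ?_⟩
  let A (a : α) (p q : ℕ) : Set ℕ := {m | ∃ s, R (p, q, m, s, a) = true}
  have hA : UniformlyRE fun y : (α × ℕ) × ℕ => A y.1.1 y.1.2 y.2 :=
    uniformlyRE_setOf_exists_reordered hR
  obtain ⟨h, hh, hran⟩ := exists_computable_image_WSet_ran_phi_eq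
    (S := fun a => columnFamily (A a)) hA.columnFamily
  refine ⟨h, hh, fun a => ?_, fun a => ?_⟩
  · simp only [FSJump_eqCE_iff, hran, he₀, range_columnFamily_eq_lowerColumns_iff, hP, A,
      eq_univ_iff_forall, mem_ofPred_eq]
  · rw [subE_eqCE_iff, hran, he₀]
    exact range_columnFamily_subset

/-- If `P ⊆ ℕ` is `Π⁰₄`, then there are `e₀` and a computable `h` with
`P n ↔ h n (=^{ce})⁺ e₀`, and `h n ⊆_{=^{ce}} e₀` for all `n`. -/
theorem pi04_reducible_to_jump_eqCE (P : Set ℕ)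
    (R : ℕ × ℕ × ℕ × ℕ × ℕ → Bool) (hR : Computable R)
    (hP : ∀ n, n ∈ P ↔ ∀ p, ∃ q, ∀ m, ∃ s, R (p, q, m, s, n) = true) :
    ∃ e₀ : ℕ, ∃ h : ℕ → ℕ, Computable h ∧
      (∀ n, n ∈ P ↔ FSJump eqCE (h n) e₀) ∧ (∀ n, subE eqCE (h n) e₀) := by
  obtain ⟨e₀, he₀⟩ := pi04_reducible_to_jump_eqCE_general
  exact ⟨e₀, he₀ P R hR hP⟩
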